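/- A finite set S of points in ℝ² has finite order under T if and only if S is one of the following: (1) the empty set; (2) a set of collinear points; (3) a set of collinear points together with one additional point not on their common line; (4) the four vertices of a nondegenerate parallelogram; (5) the four vertices of a nondegenerate parallelogram together with the intersection point of its two diagonals. -/

import Mathlib

open Set Filter

noncomputable section

/-- The line through two points in the plane `ℝ × ℝ`. -/
def line (a b : ℝ × ℝ) : AffineSubspace ℝ (ℝ × ℝ) := affineSpan ℝ {a, b}

/-- The intersection operation `T`: the set of all intersection points of pairs of
distinct lines through pairs of distinct points of `S`. -/
def interT (S : Set (ℝ × ℝ)) : Set (ℝ × ℝ) :=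
  {x | ∃ a ∈ S, ∃ b ∈ S, ∃ c ∈ S, ∃ d ∈ S,
    a ≠ b ∧ c ≠ d ∧ line a b ≠ line c d ∧ x ∈ line a b ∧ x ∈ line c d}

/-- `A, B, C, D` are the vertices of a nondegenerate parallelogram:
`B - A = C - D ≠ 0` and `A, B, D` are not collinear. -/
def IsParallelogram (A B C D : ℝ × ℝ) : Prop :=
  B - A = C - D ∧ B - A ≠ 0 ∧ ¬ Collinear ℝ ({A, B, D} : Set (ℝ × ℝ))


/-- The two-dimensional cross product. -/
def cr (u v : ℝ × ℝ) : ℝ := u.1 * v.2 - u.2 * v.1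

/-- Closed under intersections of non-parallel spanned lines. -/
def Clo (R : Set (ℝ × ℝ)) : Prop :=
  ∀ a ∈ R, ∀ b ∈ R, ∀ c ∈ R, ∀ d ∈ R, ∀ x : ℝ × ℝ, cr (b - a) (d - c) ≠ 0 →
    cr (b - a) (x - a) = 0 → cr (d - c) (x - c) = 0 → x ∈ R

lemma Clo.co {R : Set (ℝ × ℝ)} (h : Clo R) {a1 a2 b1 b2 c1 c2 d1 d2 : ℝ} (x y : ℝ)
    (ha : (a1, a2) ∈ R) (hb : (b1, b2) ∈ R) (hc : (c1, c2) ∈ R) (hd : (d1, d2) ∈ R)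
    (h0 : (b1 - a1) * (d2 - c2) - (b2 - a2) * (d1 - c1) ≠ 0)
    (h1 : (b1 - a1) * (y - a2) - (b2 - a2) * (x - a1) = 0)
    (h2 : (d1 - c1) * (y - c2) - (d2 - c2) * (x - c1) = 0) : (x, y) ∈ R :=
  h _ ha _ hb _ hc _ hd (x, y) (by simpa [cr] using h0) (by simpa [cr] using h1)
    (by simpa [cr] using h2)

lemma mem_line_iff {a b : ℝ × ℝ} (hab : a ≠ b) (x : ℝ × ℝ) :
    x ∈ line a b ↔ cr (b - a) (x - a) = 0 := by
  unfold line
  rw [mem_affineSpan_pair_iff_exists_lineMap_eq]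
  constructor
  · rintro ⟨r, rfl⟩
    simp [cr, AffineMap.lineMap_apply]
    ring
  · intro h
    have hpos : 0 < (b.1 - a.1) ^ 2 + (b.2 - a.2) ^ 2 := by
      by_contra hn
      apply hab
      have h1 : b.1 - a.1 = 0 := by nlinarith [sq_nonneg (b.1 - a.1), sq_nonneg (b.2 - a.2)]
      have h2 : b.2 - a.2 = 0 := by nlinarith [sq_nonneg (b.1 - a.1), sq_nonneg (b.2 - a.2)]
      ext <;> linarith
    refine ⟨((x.1 - a.1) * (b.1 - a.1) + (x.2 - a.2) * (b.2 - a.2)) /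
      ((b.1 - a.1) ^ 2 + (b.2 - a.2) ^ 2), ?_⟩
    simp [cr] at h
    ext
    · simp [AffineMap.lineMap_apply]
      field_simp
      linear_combination (b.2 - a.2) * h
    · simp [AffineMap.lineMap_apply]
      field_simp
      linear_combination -(b.1 - a.1) * h

lemma collinear_iff_cr (S : Set (ℝ × ℝ)) :
    Collinear ℝ S ↔ ∀ a ∈ S, ∀ b ∈ S, ∀ c ∈ S, cr (b - a) (c - a) = 0 := by
  constructor
  · intro h a ha b hb c hc
    rw [collinear_iff_of_mem ha] at h
    obtain ⟨v, hv⟩ := h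
    obtain ⟨r, rfl⟩ := hv b hb
    obtain ⟨s, rfl⟩ := hv c hc
    simp [cr]
    ring
  · intro h
    by_cases hs : S.Subsingleton
    · rcases hs.eq_empty_or_singleton with rfl | ⟨p, rfl⟩
      · exact collinear_empty ℝ _
      · exact collinear_singleton ℝ p
    · rw [Set.not_subsingleton_iff] at hs
      obtain ⟨a, ha, b, hb, hab⟩ := hs
      have : S ⊆ (line a b : Set (ℝ × ℝ)) := by
        intro c hc
        exact (mem_line_iff hab c).2 (h a ha b hb c hc)
      rw [collinear_iff_of_mem ha]
      refine ⟨b -ᵥ a, fun c hc => ?_⟩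
      obtain ⟨r, hr⟩ := mem_affineSpan_pair_iff_exists_lineMap_eq.1 (this hc)
      exact ⟨r, by rw [← hr, AffineMap.lineMap_apply]⟩

lemma mem_interT (S : Set (ℝ × ℝ)) (x : ℝ × ℝ) :
    x ∈ interT S ↔ ∃ a ∈ S, ∃ b ∈ S, ∃ c ∈ S, ∃ d ∈ S, cr (b - a) (d - c) ≠ 0 ∧
      cr (b - a) (x - a) = 0 ∧ cr (d - c) (x - c) = 0 := by
  constructor
  · rintro ⟨a, ha, b, hb, c, hc, d, hd, hab, hcd, hl, h1, h2⟩
    refine ⟨a, ha, b, hb, c, hc, d, hd, ?_, (mem_line_iff hab x).1 h1, (mem_line_iff hcd x).1 h2⟩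
    intro h0
    apply hl
    rw [mem_line_iff hab] at h1
    rw [mem_line_iff hcd] at h2
    have key : ∀ {a b c d y : ℝ × ℝ}, a ≠ b → cr (b - a) (d - c) = 0 → cr (b - a) (x - a) = 0 →
        cr (d - c) (x - c) = 0 → cr (b - a) (y - a) = 0 → cr (d - c) (y - c) = 0 := by
      intro a b c d y hab h0 h1 h2 h3
      simp only [cr, Prod.fst_sub, Prod.snd_sub] at *
      have e1 : (b.1 - a.1) * ((d.1 - c.1) * (y.2 - c.2) - (d.2 - c.2) * (y.1 - c.1)) = 0 := by
        linear_combination (b.1 - a.1) * h2 + (d.1 - c.1) * (h3 - h1) - (y.1 - x.1) * h0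
      have e2 : (b.2 - a.2) * ((d.1 - c.1) * (y.2 - c.2) - (d.2 - c.2) * (y.1 - c.1)) = 0 := by
        linear_combination (b.2 - a.2) * h2 + (d.2 - c.2) * (h3 - h1) - (y.2 - x.2) * h0
      rcases mul_eq_zero.1 e1 with e1 | e1
      · rcases mul_eq_zero.1 e2 with e2 | e2
        · exact absurd (by ext <;> linarith) hab
        · exact e2
      · exact e1
    ext y
    rw [mem_line_iff hab, mem_line_iff hcd]
    constructor
    · exact key hab h0 h1 h2
    · refine key hcd ?_ h2 h1
      simp only [cr] at *
      linarith
  · rintro ⟨a, ha, b, hb, c, hc, d, hd, h0, h1, h2⟩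
    have hab : a ≠ b := by rintro rfl; simp [cr] at h0
    have hcd : c ≠ d := by rintro rfl; simp [cr] at h0
    refine ⟨a, ha, b, hb, c, hc, d, hd, hab, hcd, ?_, (mem_line_iff hab x).2 h1,
      (mem_line_iff hcd x).2 h2⟩
    intro hl
    apply h0
    have hc' : c ∈ line a b := hl ▸ left_mem_affineSpan_pair ℝ c d
    have hd' : d ∈ line a b := hl ▸ right_mem_affineSpan_pair ℝ c d
    rw [mem_line_iff hab] at hc' hd'
    simp only [cr, Prod.fst_sub, Prod.snd_sub] at *
    linarith

lemma clo_iff (R : Set (ℝ × ℝ)) : Clo R ↔ interT R ⊆ R := by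
  constructor
  · intro h x hx
    rw [mem_interT] at hx
    obtain ⟨a, ha, b, hb, c, hc, d, hd, h0, h1, h2⟩ := hx
    exact h a ha b hb c hc d hd x h0 h1 h2
  · intro h a ha b hb c hc d hd x h0 h1 h2
    exact h ((mem_interT R x).2 ⟨a, ha, b, hb, c, hc, d, hd, h0, h1, h2⟩)

lemma cr_unique {u v x y : ℝ × ℝ} (z w : ℝ × ℝ) (h : cr u v ≠ 0)
    (h1 : cr u (x - z) = 0) (h2 : cr u (y - z) = 0)
    (h3 : cr v (x - w) = 0) (h4 : cr v (y - w) = 0) : x = y := by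
  simp only [cr, Prod.fst_sub, Prod.snd_sub] at *
  ext
  · apply mul_left_cancel₀ h
    linear_combination -v.1 * (h2 - h1) + u.1 * (h4 - h3)
  · apply mul_left_cancel₀ h
    linear_combination -v.2 * (h2 - h1) + u.2 * (h4 - h3)

lemma interT_mono {S R : Set (ℝ × ℝ)} (h : S ⊆ R) : interT S ⊆ interT R := by
  rintro x ⟨a, ha, b, hb, c, hc, d, hd, hx⟩
  exact ⟨a, h ha, b, h hb, c, h hc, d, h hd, hx⟩

lemma interT_finite {S : Set (ℝ × ℝ)} (h : S.Finite) : (interT S).Finite := by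
  have hf := ((h.prod h).prod (h.prod h)).image
    (fun q : ((ℝ × ℝ) × (ℝ × ℝ)) × ((ℝ × ℝ) × (ℝ × ℝ)) =>
      q.1.1 + (cr (q.2.1 - q.1.1) (q.2.2 - q.2.1) / cr (q.1.2 - q.1.1) (q.2.2 - q.2.1)) •
        (q.1.2 - q.1.1))
  refine hf.subset ?_
  intro x hx
  rw [mem_interT] at hx
  obtain ⟨a, ha, b, hb, c, hc, d, hd, h0, h1, h2⟩ := hx
  refine ⟨((a, b), (c, d)), ⟨⟨ha, hb⟩, ⟨hc, hd⟩⟩, ?_⟩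
  simp only
  refine cr_unique a c h0 ?_ h1 ?_ h2
  · simp only [cr, Prod.fst_sub, Prod.snd_sub, Prod.fst_add, Prod.snd_add, Prod.smul_fst,
      Prod.smul_snd, smul_eq_mul]
    ring
  · simp only [cr, Prod.fst_sub, Prod.snd_sub, Prod.fst_add, Prod.snd_add, Prod.smul_fst,
      Prod.smul_snd, smul_eq_mul] at h0 ⊢
    obtain ⟨D, hD⟩ : ∃ D, D = (b.1 - a.1) * (d.2 - c.2) - (b.2 - a.2) * (d.1 - c.1) := ⟨_, rfl⟩
    rw [← hD] at h0 ⊢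
    field_simp
    rw [hD]
    ring

lemma subset_interT {S : Set (ℝ × ℝ)} (h : ¬ Collinear ℝ S) : S ⊆ interT S := by
  intro x hx
  by_contra hn
  apply h
  rw [collinear_iff_cr]
  have key : ∀ a ∈ S, ∀ b ∈ S, cr (a - x) (b - x) = 0 := by
    intro a ha b hb
    by_contra h0
    exact hn ((mem_interT S x).2 ⟨x, hx, a, ha, x, hx, b, hb, h0, by simp [cr], by simp [cr]⟩)
  intro a ha b hb c hc
  have h1 := key a ha b hb
  have h2 := key b hb c hc
  have h3 := key a ha c hc
  simp only [cr, Prod.fst_sub, Prod.snd_sub] at *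
  linarith

/-- Affine coordinates. -/
def phi (A u v : ℝ × ℝ) (p : ℝ × ℝ) : ℝ × ℝ := (A.1 + p.1 * u.1 + p.2 * v.1, A.2 + p.1 * u.2 + p.2 * v.2)

lemma cr_phi (A u v a b c d : ℝ × ℝ) :
    cr (phi A u v b - phi A u v a) (phi A u v d - phi A u v c) = cr u v * cr (b - a) (d - c) := by
  simp only [cr, phi, Prod.fst_sub, Prod.snd_sub]
  ring

lemma phi_surj {A u v : ℝ × ℝ} (h : cr u v ≠ 0) (x : ℝ × ℝ) : ∃ p, phi A u v p = x := by
  refine ⟨(cr (x - A) v / cr u v, cr u (x - A) / cr u v), ?_⟩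
  simp only [cr, phi, Prod.fst_sub, Prod.snd_sub] at *
  obtain ⟨D, hD⟩ : ∃ D, D = u.1 * v.2 - u.2 * v.1 := ⟨_, rfl⟩
  rw [← hD] at h ⊢
  ext <;> simp only <;> field_simp <;> rw [hD] <;> ring

lemma phi_inj {A u v : ℝ × ℝ} (h : cr u v ≠ 0) : Function.Injective (phi A u v) := by
  intro x y hxy
  have h1 := congrArg Prod.fst hxy
  have h2 := congrArg Prod.snd hxy
  simp only [phi, cr] at *
  ext
  · apply mul_left_cancel₀ h
    linear_combination v.2 * h1 - v.1 * h2
  · apply mul_left_cancel₀ h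
    linear_combination u.1 * h2 - u.2 * h1

lemma clo_phi {A u v : ℝ × ℝ} (h : cr u v ≠ 0) (R : Set (ℝ × ℝ)) :
    Clo (phi A u v ⁻¹' R) ↔ Clo R := by
  constructor
  · intro H a ha b hb c hc d hd x h0 h1 h2
    obtain ⟨a, rfl⟩ := phi_surj (A := A) h a
    obtain ⟨b, rfl⟩ := phi_surj (A := A) h b
    obtain ⟨c, rfl⟩ := phi_surj (A := A) h c
    obtain ⟨d, rfl⟩ := phi_surj (A := A) h d
    obtain ⟨x, rfl⟩ := phi_surj (A := A) h x
    rw [cr_phi] at h0 h1 h2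
    exact H a ha b hb c hc d hd x (right_ne_zero_of_mul h0)
      ((mul_eq_zero.1 h1).resolve_left h) ((mul_eq_zero.1 h2).resolve_left h)
  · intro H a ha b hb c hc d hd x h0 h1 h2
    refine H _ ha _ hb _ hc _ hd _ ?_ ?_ ?_
    · rw [cr_phi]; exact mul_ne_zero h h0
    · rw [cr_phi, h1, mul_zero]
    · rw [cr_phi, h2, mul_zero]

/-- Square case: all points are corners or the centre. -/
lemma square_case {R : Set (ℝ × ℝ)} (H : Clo R) (h00 : ((0 : ℝ), (0 : ℝ)) ∈ R)
    (h10 : ((1 : ℝ), (0 : ℝ)) ∈ R) (h01 : ((0 : ℝ), (1 : ℝ)) ∈ R) (h11 : ((1 : ℝ), (1 : ℝ)) ∈ R)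
    (hx0 : ∀ x y : ℝ, (x, y) ∈ R → 0 ≤ x) (hy0 : ∀ x y : ℝ, (x, y) ∈ R → 0 ≤ y)
    (hx1 : ∀ x y : ℝ, (x, y) ∈ R → x ≤ 1) (hy1 : ∀ x y : ℝ, (x, y) ∈ R → y ≤ 1) :
    R ⊆ {(0, 0), (1, 0), (1, 1), (0, 1), (1 / 2, 1 / 2)} := by
  have b1 : ∀ t : ℝ, 0 < t → t < 1 → (t, (0 : ℝ)) ∉ R := by
    intro t ht ht1 hm
    have := hy0 _ _ (H.co 1 (1 - 1 / t) h01 hm h10 h11 (by norm_num; linarith)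
      (by field_simp; ring) (by field_simp; ring))
    have : 1 < 1 / t := by rw [lt_div_iff₀ ht]; linarith
    linarith
  have b2 : ∀ t : ℝ, 0 < t → t < 1 → (t, (1 : ℝ)) ∉ R := by
    intro t ht ht1 hm
    have := hy1 _ _ (H.co 1 (1 / t) h00 hm h10 h11 (by norm_num; linarith)
      (by field_simp; ring) (by field_simp; ring))
    have : 1 < 1 / t := by rw [lt_div_iff₀ ht]; linarith
    linarith
  have b3 : ∀ t : ℝ, 0 < t → t < 1 → ((0 : ℝ), t) ∉ R := by
    intro t ht ht1 hm
    have := hx0 _ _ (H.co (1 - 1 / t) 1 h10 hm h01 h11 (by norm_num; linarith)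
      (by field_simp; ring) (by field_simp; ring))
    have : 1 < 1 / t := by rw [lt_div_iff₀ ht]; linarith
    linarith
  have b4 : ∀ t : ℝ, 0 < t → t < 1 → ((1 : ℝ), t) ∉ R := by
    intro t ht ht1 hm
    have := hx1 _ _ (H.co (1 / t) 1 h00 hm h01 h11 (by norm_num; linarith)
      (by field_simp; ring) (by field_simp; ring))
    have : 1 < 1 / t := by rw [lt_div_iff₀ ht]; linarith
    linarith
  rintro ⟨x, y⟩ hm
  have x0 := hx0 x y hm
  have x1 := hx1 x y hm
  have y0 := hy0 x y hm
  have y1 := hy1 x y hm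
  simp only [Set.mem_insert_iff, Set.mem_singleton_iff, Prod.mk.injEq]
  rcases x0.eq_or_lt with rfl | x0
  · rcases y0.eq_or_lt with rfl | y0
    · simp
    · rcases y1.eq_or_lt with rfl | y1
      · simp
      · exact absurd hm (b3 y y0 y1)
  rcases x1.eq_or_lt with rfl | x1
  · rcases y0.eq_or_lt with rfl | y0
    · simp
    · rcases y1.eq_or_lt with rfl | y1
      · simp
      · exact absurd hm (b4 y y0 y1)
  rcases y0.eq_or_lt with rfl | y0
  · exact absurd hm (b1 x x0 x1)
  rcases y1.eq_or_lt with rfl | y1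
  · exact absurd hm (b2 x x0 x1)
  have e1 : x = y := by
    rcases lt_trichotomy x y with hl | he | hl
    · exfalso
      refine b2 (x / y) (by positivity) (by rw [div_lt_one y0]; exact hl) ?_
      exact H.co _ _ h00 hm h01 h11 (by norm_num; linarith) (by field_simp; ring)
        (by field_simp; ring)
    · exact he
    · exfalso
      refine b4 (y / x) (by positivity) (by rw [div_lt_one x0]; exact hl) ?_
      exact H.co _ _ h00 hm h10 h11 (by norm_num; linarith) (by field_simp; ring)
        (by field_simp; ring)
  subst e1
  have e2 : x + x = 1 := by
    have x1' : (1 - x) ≠ 0 := by linarith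
    rcases lt_trichotomy (x + x) 1 with hl | he | hl
    · exfalso
      refine b3 (x / (1 - x)) (div_pos x0 (by linarith))
        (by rw [div_lt_one (by linarith)]; linarith) ?_
      exact H.co _ _ h10 hm h00 h01 (by norm_num; linarith) (by field_simp; ring)
        (by field_simp; ring)
    · exact he
    · exfalso
      refine b2 (1 - (1 - x) / x) ?_ ?_ ?_
      · have : (1 - x) / x < 1 := by rw [div_lt_one x0]; linarith
        linarith
      · have : 0 < (1 - x) / x := div_pos (by linarith) x0
        linarith
      exact H.co _ _ h10 hm h01 h11 (by norm_num; linarith) (by field_simp; ring)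
        (by field_simp; ring)
  right; right; right; right
  constructor <;> linarith

/-- Triangle case: all points but one vertex lie on one side. -/
lemma triangle_case {R : Set (ℝ × ℝ)} (H : Clo R) (h00 : ((0 : ℝ), (0 : ℝ)) ∈ R)
    (h10 : ((1 : ℝ), (0 : ℝ)) ∈ R) (h01 : ((0 : ℝ), (1 : ℝ)) ∈ R)
    (hx0 : ∀ x y : ℝ, (x, y) ∈ R → 0 ≤ x) (hy0 : ∀ x y : ℝ, (x, y) ∈ R → 0 ≤ y)
    (hs : ∀ x y : ℝ, (x, y) ∈ R → x + y ≤ 1) :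
    (∃ p ∈ R, Collinear ℝ (R \ {p})) := by
  have int1 : ∀ x y : ℝ, 0 < x → 0 < y → x + y < 1 → (x, y) ∈ R →
      (x = 1 / 3 ∧ y = 1 / 3) ∧ (x / (1 - y), (0 : ℝ)) ∈ R ∧ ((0 : ℝ), y / (1 - x)) ∈ R := by
    intro x y x0 y0 xy hm
    have hx : (1 - x) ≠ 0 := by linarith
    have hy : (1 - y) ≠ 0 := by linarith
    have hxy : (x + y) ≠ 0 := by linarith
    have m1 : (x / (1 - y), (0 : ℝ)) ∈ R :=
      H.co _ _ h01 hm h00 h10 (by norm_num; exact hy ∘ fun h => by linarith) (by field_simp; ring) (by field_simp; ring)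
    have m2 : ((0 : ℝ), y / (1 - x)) ∈ R :=
      H.co _ _ h10 hm h00 h01 (by norm_num; exact hx ∘ fun h => by linarith) (by field_simp; ring) (by field_simp; ring)
    have m3 : (x / (x + y), y / (x + y)) ∈ R :=
      H.co _ _ h00 hm h10 h01 (by norm_num; linarith) (by field_simp; ring) (by field_simp; ring)
    refine ⟨?_, m1, m2⟩
    have c0 : 0 < x / (1 - y) := div_pos x0 (by linarith)
    have c1 : x / (1 - y) < 1 := by rw [div_lt_one (by linarith)]; linarith
    have d0 : 0 < y / (1 - x) := div_pos y0 (by linarith)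
    have d1 : y / (1 - x) < 1 := by rw [div_lt_one (by linarith)]; linarith
    have exy : x = y := by
      have hcd : x / (1 - y) = y / (1 - x) := by
        generalize x / (1 - y) = c at *
        generalize y / (1 - x) = d at *
        by_contra hne
        have hne' : c - d ≠ 0 := sub_ne_zero.2 hne
        have hq := H.co (c * (1 - d) / (c - d)) (d * (c - 1) / (c - d)) m1 m2 h10 h01
          (by norm_num; exact hne' ∘ fun h => by linarith) (by field_simp; ring) (by field_simp; ring)
        have q1 := hx0 _ _ hq
        have q2 := hy0 _ _ hq
        rcases lt_or_gt_of_ne hne' with hl | hl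
        · have : c * (1 - d) / (c - d) < 0 :=
            div_neg_of_pos_of_neg (mul_pos c0 (by linarith)) hl
          linarith
        · have : d * (c - 1) / (c - d) < 0 :=
            div_neg_of_neg_of_pos (mul_neg_of_pos_of_neg d0 (by linarith)) hl
          linarith
      rw [div_eq_div_iff hy hx] at hcd
      have : (x - y) * (1 - (x + y)) = 0 := by linarith
      rcases mul_eq_zero.1 this with h | h <;> linarith
    subst exy
    have m3' : ((1 : ℝ) / 2, (1 : ℝ) / 2) ∈ R := by
      have e : x / (x + x) = 1 / 2 := by field_simp; ring
      rwa [e] at m3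
    have hc : x / (1 - x) = 1 / 2 := by
      generalize x / (1 - x) = c at *
      by_contra hne
      have hne' : 2 * c - 1 ≠ 0 := fun h => hne (by linarith)
      have e0 : (2 * c - 1) * (c / (2 * c - 1)) = c := mul_div_cancel₀ _ hne'
      have hq := H.co 0 (c / (2 * c - 1)) m3' m1 h00 h01
        (by norm_num; exact hne' ∘ fun h => by linarith) (by linear_combination e0 / 2) (by ring)
      have q1 := hy0 _ _ hq
      have q2 := hs _ _ hq
      rcases lt_or_gt_of_ne hne' with hl | hl
      · have : c / (2 * c - 1) < 0 := div_neg_of_pos_of_neg c0 hl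
        linarith
      · have : 1 < c / (2 * c - 1) := by rw [lt_div_iff₀ hl]; linarith
        linarith
    rw [div_eq_div_iff hy (by norm_num)] at hc
    constructor <;> linarith
  have int2 : ∀ x y : ℝ, 0 < x → 0 < y → x + y < 1 → (x, y) ∉ R := by
    intro x y x0 y0 xy hm
    obtain ⟨⟨rfl, rfl⟩, m1, m2⟩ := int1 x y x0 y0 xy hm
    norm_num at m1 m2
    have hq := H.co (1 / 4) (1 / 4) m1 m2 h00 hm (by norm_num) (by norm_num) (by norm_num)
    have := (int1 _ _ (by norm_num) (by norm_num) (by norm_num) hq).1.1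
    norm_num at this
  have n1 : ∀ t s : ℝ, 0 < t → t < 1 → 0 < s → s < 1 → (t, (0 : ℝ)) ∈ R → ((0 : ℝ), s) ∉ R := by
    intro t s t0 t1 s0 s1 ht hs'
    obtain ⟨D, hD⟩ : ∃ D, D = 1 - t * s := ⟨_, rfl⟩
    have hd : 0 < D := by nlinarith
    have hd' := hd.ne'
    refine int2 (t * (1 - s) / D) (s * (1 - t) / D)
      (div_pos (mul_pos t0 (by linarith)) hd) (div_pos (mul_pos s0 (by linarith)) hd) ?_
      (H.co _ _ h10 hs' h01 ht ?_ ?_ ?_)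
    · rw [← add_div, div_lt_one hd]; nlinarith
    · intro h; apply hd'; linarith
    · field_simp; rw [hD]; ring
    · field_simp; rw [hD]; ring
  have n2 : ∀ t s : ℝ, 0 < t → t < 1 → 0 < s → s < 1 → (t, (0 : ℝ)) ∈ R → (s, 1 - s) ∉ R := by
    intro t s t0 t1 s0 s1 ht hs'
    obtain ⟨D, hD⟩ : ∃ D, D = s + t - s * t := ⟨_, rfl⟩
    have hd : 0 < D := by nlinarith
    have hd' := hd.ne'
    refine int2 (s * t / D) ((1 - s) * t / D)
      (div_pos (mul_pos s0 t0) hd) (div_pos (mul_pos (by linarith) t0) hd) ?_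
      (H.co _ _ h00 hs' h01 ht ?_ ?_ ?_)
    · rw [← add_div, div_lt_one hd]; nlinarith
    · intro h; apply hd'; linarith
    · field_simp; rw [hD]; ring
    · field_simp; rw [hD]; ring
  have n3 : ∀ t s : ℝ, 0 < t → t < 1 → 0 < s → s < 1 → ((0 : ℝ), t) ∈ R → (1 - s, s) ∉ R := by
    intro t s t0 t1 s0 s1 ht hs'
    obtain ⟨D, hD⟩ : ∃ D, D = s + t - s * t := ⟨_, rfl⟩
    have hd : 0 < D := by nlinarith
    have hd' := hd.ne'
    refine int2 ((1 - s) * t / D) (s * t / D)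
      (div_pos (mul_pos (by linarith) t0) hd) (div_pos (mul_pos s0 t0) hd) ?_
      (H.co _ _ h00 hs' h10 ht ?_ ?_ ?_)
    · rw [← add_div, div_lt_one hd]; nlinarith
    · intro h; apply hd'; linarith
    · field_simp; rw [hD]; ring
    · field_simp; rw [hD]; ring
  have cases : ∀ x y : ℝ, (x, y) ∈ R → (x = 0 ∧ y = 0) ∨ (x = 1 ∧ y = 0) ∨ (x = 0 ∧ y = 1) ∨
      (0 < x ∧ x < 1 ∧ y = 0) ∨ (x = 0 ∧ 0 < y ∧ y < 1) ∨ (0 < x ∧ x < 1 ∧ y = 1 - x) := by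
    intro x y hm
    have x0 := hx0 x y hm
    have y0 := hy0 x y hm
    have s0 := hs x y hm
    rcases x0.eq_or_lt with rfl | x0
    · rcases y0.eq_or_lt with rfl | y0
      · simp
      · rcases (show y ≤ 1 by linarith).eq_or_lt with rfl | y1
        · simp
        · simp [y0, y1]
    · rcases y0.eq_or_lt with rfl | y0
      · rcases (show x ≤ 1 by linarith).eq_or_lt with rfl | y1
        · simp
        · simp [x0, y1]
      · rcases s0.eq_or_lt with s0 | s0
        · right; right; right; right; right
          refine ⟨x0, ?_, ?_⟩ <;> linarith
        · exact absurd hm (int2 x y x0 y0 s0)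
  by_cases c1 : ∃ t : ℝ, 0 < t ∧ t < 1 ∧ (t, (0 : ℝ)) ∈ R
  · obtain ⟨t, t0, t1, ht⟩ := c1
    refine ⟨(0, 1), h01, ?_⟩
    have : ∀ p ∈ R \ {((0 : ℝ), (1 : ℝ))}, p.2 = 0 := by
      rintro ⟨x, y⟩ ⟨hm, hne⟩
      rcases cases x y hm with h | h | h | h | h | h
      · exact h.2
      · exact h.2
      · exact absurd (by simp [h.1, h.2]) hne
      · exact h.2.2
      · obtain ⟨rfl, y0, y1⟩ := h
        exact absurd hm (n1 t y t0 t1 y0 y1 ht)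
      · obtain ⟨y0, y1, rfl⟩ := h
        exact absurd hm (n2 t x t0 t1 y0 y1 ht)
    rw [collinear_iff_cr]
    intro a ha b hb c hc
    simp [cr, this a ha, this b hb, this c hc]
  by_cases c2 : ∃ t : ℝ, 0 < t ∧ t < 1 ∧ ((0 : ℝ), t) ∈ R
  · obtain ⟨t, t0, t1, ht⟩ := c2
    refine ⟨(1, 0), h10, ?_⟩
    have : ∀ p ∈ R \ {((1 : ℝ), (0 : ℝ))}, p.1 = 0 := by
      rintro ⟨x, y⟩ ⟨hm, hne⟩
      rcases cases x y hm with h | h | h | h | h | h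
      · exact h.1
      · exact absurd (by simp [h.1, h.2]) hne
      · exact h.1
      · obtain ⟨y0, y1, rfl⟩ := h
        exact absurd ⟨x, y0, y1, hm⟩ c1
      · exact h.1
      · obtain ⟨y0, y1, rfl⟩ := h
        exact absurd (by simpa using hm) (n3 t (1 - x) t0 t1 (by linarith) (by linarith) ht)
    rw [collinear_iff_cr]
    intro a ha b hb c hc
    simp [cr, this a ha, this b hb, this c hc]
  · refine ⟨(0, 0), h00, ?_⟩
    have : ∀ p ∈ R \ {((0 : ℝ), (0 : ℝ))}, p.2 = 1 - p.1 := by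
      rintro ⟨x, y⟩ ⟨hm, hne⟩
      rcases cases x y hm with h | h | h | h | h | h
      · exact absurd (by simp [h.1, h.2]) hne
      · simp [h.1, h.2]
      · simp [h.1, h.2]
      · obtain ⟨y0, y1, rfl⟩ := h
        exact absurd ⟨x, y0, y1, hm⟩ c1
      · obtain ⟨rfl, y0, y1⟩ := h
        exact absurd ⟨y, y0, y1, hm⟩ c2
      · exact h.2.2
    rw [collinear_iff_cr]
    intro a ha b hb c hc
    simp [cr, this a ha, this b hb, this c hc]
    ring

/-- Normalised corner case. -/
lemma corner_case {R : Set (ℝ × ℝ)} (hf : R.Finite) (H : Clo R) (h00 : ((0 : ℝ), (0 : ℝ)) ∈ R)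
    (h10 : ((1 : ℝ), (0 : ℝ)) ∈ R) (h01 : ((0 : ℝ), (1 : ℝ)) ∈ R)
    (hx0 : ∀ x y : ℝ, (x, y) ∈ R → 0 ≤ x) (hy0 : ∀ x y : ℝ, (x, y) ∈ R → 0 ≤ y)
    (hx1 : ∀ x : ℝ, (x, (0 : ℝ)) ∈ R → x ≤ 1) (hy1 : ∀ y : ℝ, ((0 : ℝ), y) ∈ R → y ≤ 1) :
    (∃ p ∈ R, Collinear ℝ (R \ {p})) ∨
    R ⊆ {(0, 0), (1, 0), (1, 1), (0, 1), (1 / 2, 1 / 2)} := by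
  obtain ⟨⟨dx, dy⟩, ⟨hD, hDy⟩, hmax⟩ := Set.exists_max_image (R ∩ {p | 0 < p.2})
    (fun p => toLex ((p.1 - 1) / p.2, p.2)) (hf.subset Set.inter_subset_left)
    ⟨(0, 1), h01, by simp⟩
  simp only [Set.mem_ofPred_eq] at hDy
  have hsl : ∀ x y : ℝ, (x, y) ∈ R → (x - 1) * dy ≤ (dx - 1) * y := by
    intro x y hm
    rcases (hy0 x y hm).eq_or_lt with rfl | y0
    · have := hx1 x hm
      nlinarith
    · have := hmax (x, y) ⟨hm, y0⟩
      rw [Prod.Lex.toLex_le_toLex] at this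
      have h : (x - 1) / y ≤ (dx - 1) / dy := by
        rcases this with h | h
        · exact h.le
        · exact h.1.le
      rwa [div_le_div_iff₀ y0 hDy] at h
  by_cases hd1 : dx = 1
  · subst hd1
    right
    have X1 : ∀ x y : ℝ, (x, y) ∈ R → x ≤ 1 := by
      intro x y hm
      have := hsl x y hm
      nlinarith
    have Y1 : ∀ y : ℝ, ((1 : ℝ), y) ∈ R → y ≤ dy := by
      intro y hm
      rcases (hy0 1 y hm).eq_or_lt with rfl | y0
      · exact hDy.le
      · have := hmax (1, y) ⟨hm, y0⟩
        rw [Prod.Lex.toLex_le_toLex] at this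
        rcases this with h | h
        · simp at h
        · exact h.2
    have hdy : dy = 1 := by
      by_contra hne
      have hne' : 1 - dy ≠ 0 := fun h => hne (by linarith)
      have hq := H.co (1 / (1 - dy)) 0 h01 hD h00 h10
        (by norm_num; exact hne' ∘ fun h => by linarith) (by field_simp; ring) (by field_simp; ring)
      have q0 := hx0 _ _ hq
      have q1 := hx1 _ hq
      rcases lt_or_gt_of_ne hne' with hl | hl
      · have : 1 / (1 - dy) < 0 := div_neg_of_pos_of_neg one_pos hl
        linarith
      · rw [div_le_one hl] at q1
        linarith
    subst hdy
    refine square_case H h00 h10 h01 hD hx0 hy0 X1 ?_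
    intro x y hm
    by_contra hy
    push Not at hy
    rcases (hx0 x y hm).eq_or_lt with rfl | x0
    · linarith [hy1 y hm]
    · have hq := H.co 1 (1 + (y - 1) / x) h01 hm h10 hD (by norm_num; linarith)
        (by field_simp; ring) (by field_simp; ring)
      have := Y1 _ hq
      have : 0 < (y - 1) / x := div_pos (by linarith) x0
      linarith
  · left
    have hne' : 1 - dx ≠ 0 := fun h => hd1 (by linarith)
    have hq := H.co 0 (dy / (1 - dx)) h10 hD h00 h01
      (by norm_num; exact hne' ∘ fun h => by linarith) (by field_simp; ring) (by field_simp; ring)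
    have q0 := hy0 _ _ hq
    have q1 := hy1 _ hq
    have hC := hsl 0 1 h01
    have hlt : 0 < 1 - dx := by
      rcases lt_or_gt_of_ne hne' with hl | hl
      · have : dy / (1 - dx) < 0 := div_neg_of_pos_of_neg hDy hl
        linarith
      · exact hl
    rw [div_le_one hlt] at q1
    have hsum : dx - 1 = -dy := by linarith
    refine triangle_case H h00 h10 h01 hx0 hy0 ?_
    intro x y hm
    have h := hsl x y hm
    rw [hsum] at h
    nlinarith

lemma collinear_of_line {S : Set (ℝ × ℝ)} {u : ℝ × ℝ} (z : ℝ × ℝ) (hu : u ≠ 0)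
    (h : ∀ p ∈ S, cr u (p - z) = 0) : Collinear ℝ S := by
  rw [collinear_iff_cr]
  intro a ha b hb c hc
  have h1 := h a ha
  have h2 := h b hb
  have h3 := h c hc
  simp only [cr, Prod.fst_sub, Prod.snd_sub] at *
  have e1 : u.1 * ((b.1 - a.1) * (c.2 - a.2) - (b.2 - a.2) * (c.1 - a.1)) = 0 := by
    linear_combination (b.1 - a.1) * (h3 - h1) - (c.1 - a.1) * (h2 - h1)
  have e2 : u.2 * ((b.1 - a.1) * (c.2 - a.2) - (b.2 - a.2) * (c.1 - a.1)) = 0 := by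
    linear_combination (b.2 - a.2) * (h3 - h1) - (c.2 - a.2) * (h2 - h1)
  rcases mul_eq_zero.1 e1 with e1 | e1
  · rcases mul_eq_zero.1 e2 with e2 | e2
    · exact absurd (by ext <;> simp [e1, e2]) hu
    · exact e2
  · exact e1

/-- The unit square with its centre. -/
def five : Set (ℝ × ℝ) := {(0, 0), (1, 0), (1, 1), (0, 1), (1 / 2, 1 / 2)}

lemma classify {R : Set (ℝ × ℝ)} (hf : R.Finite) (H : Clo R) (hn : ¬ Collinear ℝ R) :
    (∃ p ∈ R, Collinear ℝ (R \ {p})) ∨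
    ∃ A u v : ℝ × ℝ, cr u v ≠ 0 ∧ R ⊆ phi A u v '' five := by
  have hne : R.Nonempty := by
    rw [Set.nonempty_iff_ne_empty]
    rintro rfl
    exact hn (collinear_empty ℝ _)
  obtain ⟨A, hA, hAmax⟩ := Set.exists_max_image R (fun p => p.1 ^ 2 + p.2 ^ 2) hf hne
  obtain ⟨f, hfd⟩ : ∃ f : ℝ × ℝ → ℝ, ∀ p, f p = A.1 * (A.1 - p.1) + A.2 * (A.2 - p.2) :=
    ⟨_, fun _ => rfl⟩
  obtain ⟨g, hgd⟩ : ∃ g : ℝ × ℝ → ℝ, ∀ p, g p = A.1 * (p.2 - A.2) - A.2 * (p.1 - A.1) :=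
    ⟨_, fun _ => rfl⟩
  have fpos : ∀ p ∈ R, p ≠ A → 0 < f p := by
    intro p hp hpA
    have h := hAmax p hp
    rw [hfd]
    by_contra hle
    apply hpA
    have h1 : p.1 - A.1 = 0 := by nlinarith [sq_nonneg (p.1 - A.1), sq_nonneg (p.2 - A.2)]
    have h2 : p.2 - A.2 = 0 := by nlinarith [sq_nonneg (p.1 - A.1), sq_nonneg (p.2 - A.2)]
    ext <;> linarith
  have hid : ∀ p q, cr (p - A) (q - A) * (A.1 ^ 2 + A.2 ^ 2) = g p * f q - f p * g q := by
    intro p q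
    simp only [hfd, hgd, cr, Prod.fst_sub, Prod.snd_sub]
    ring
  have hne2 : (R \ {A}).Nonempty := by
    rw [Set.nonempty_iff_ne_empty]
    intro he
    apply hn
    rw [Set.sdiff_eq_empty] at he
    exact (collinear_singleton ℝ A).subset he
  have hN : 0 < A.1 ^ 2 + A.2 ^ 2 := by
    obtain ⟨p, hp, hpA⟩ := hne2
    have h := fpos p hp hpA
    rw [hfd] at h
    by_contra hle
    have h1 : A.1 = 0 := by nlinarith [sq_nonneg A.1, sq_nonneg A.2]
    have h2 : A.2 = 0 := by nlinarith [sq_nonneg A.1, sq_nonneg A.2]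
    rw [h1, h2] at h
    simp at h
  obtain ⟨B, ⟨hB, hBA⟩, hBmax⟩ := Set.exists_max_image (R \ {A})
    (fun p => toLex (g p / f p, f p)) (hf.subset Set.sdiff_subset) hne2
  obtain ⟨C, ⟨hC, hCA⟩, hCmax⟩ := Set.exists_max_image (R \ {A})
    (fun p => toLex (- (g p / f p), f p)) (hf.subset Set.sdiff_subset) hne2
  have fB := fpos B hB hBA
  have fC := fpos C hC hCA
  have hB' : ∀ p ∈ R, 0 ≤ cr (B - A) (p - A) := by
    intro p hp
    by_cases hpA : p = A
    · subst hpA; simp [cr]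
    have fp := fpos p hp hpA
    have h := hBmax p ⟨hp, hpA⟩
    rw [Prod.Lex.toLex_le_toLex] at h
    have h : g p / f p ≤ g B / f B := by
      rcases h with h | h
      · exact h.le
      · exact h.1.le
    rw [div_le_div_iff₀ fp fB] at h
    have := hid B p
    by_contra hlt
    push Not at hlt
    have := mul_neg_of_neg_of_pos hlt hN
    linarith
  have hC' : ∀ p ∈ R, 0 ≤ cr (p - A) (C - A) := by
    intro p hp
    by_cases hpA : p = A
    · subst hpA; simp [cr]
    have fp := fpos p hp hpA
    have h := hCmax p ⟨hp, hpA⟩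
    rw [Prod.Lex.toLex_le_toLex] at h
    have h : g C / f C ≤ g p / f p := by
      rcases h with h | h
      · simp only at h; linarith
      · simp only at h; linarith
    rw [div_le_div_iff₀ fC fp] at h
    have := hid p C
    by_contra hlt
    push Not at hlt
    have := mul_neg_of_neg_of_pos hlt hN
    linarith
  have hBne : B - A ≠ 0 := sub_ne_zero.2 hBA
  have huv : 0 < cr (B - A) (C - A) := by
    rcases (hB' C hC).eq_or_lt with h0 | h0
    · exfalso
      apply hn
      apply collinear_of_line A hBne
      intro p hp
      have h1 := hB' p hp
      have h2 := hC' p hp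
      by_cases hpA : p = A
      · subst hpA; simp [cr]
      have fp := fpos p hp hpA
      have i1 := hid B p
      have i2 := hid p C
      have i3 := hid B C
      rw [← h0, zero_mul] at i3
      have k1 : 0 ≤ g B * f p - f B * g p := by rw [← i1]; positivity
      have k2 : 0 ≤ g p * f C - f p * g C := by rw [← i2]; positivity
      have k3 : (g B * f p - f B * g p) * f C + (g p * f C - f p * g C) * f B = 0 := by
        linear_combination -f p * i3
      have k4 : (g B * f p - f B * g p) = 0 := by
        have := mul_nonneg k1 fC.le
        have := mul_nonneg k2 fB.le
        have h5 : (g B * f p - f B * g p) * f C = 0 := by linarith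
        exact (mul_eq_zero.1 h5).resolve_right fC.ne'
      rw [k4] at i1
      exact (mul_eq_zero.1 i1).resolve_right hN.ne'
    · exact h0
  obtain ⟨u, hu⟩ : ∃ u, u = B - A := ⟨_, rfl⟩
  obtain ⟨v, hv⟩ : ∃ v, v = C - A := ⟨_, rfl⟩
  rw [← hu, ← hv] at huv
  rw [← hu] at hB'
  rw [← hv] at hC'
  have p00 : phi A u v (0, 0) = A := by ext <;> simp [phi]
  have p10 : phi A u v (1, 0) = B := by ext <;> simp [phi, hu]
  have p01 : phi A u v (0, 1) = C := by ext <;> simp [phi, hv]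
  have hcases := corner_case (R := phi A u v ⁻¹' R) (hf.preimage (phi_inj huv.ne').injOn)
    ((clo_phi huv.ne' R).2 H) (by simpa [p00] using hA) (by simpa [p10] using hB)
    (by simpa [p01] using hC) ?_ ?_ ?_ ?_
  · rcases hcases with ⟨p, hp, hcol⟩ | hsub
    · left
      refine ⟨phi A u v p, hp, ?_⟩
      rw [collinear_iff_cr] at hcol ⊢
      rintro a ⟨ha, ha'⟩ b ⟨hb, hb'⟩ c ⟨hc, hc'⟩
      obtain ⟨a, rfl⟩ := phi_surj (A := A) huv.ne' a
      obtain ⟨b, rfl⟩ := phi_surj (A := A) huv.ne' b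
      obtain ⟨c, rfl⟩ := phi_surj (A := A) huv.ne' c
      rw [cr_phi, hcol a ⟨ha, ?_⟩ b ⟨hb, ?_⟩ c ⟨hc, ?_⟩, mul_zero]
      · rintro rfl; exact ha' rfl
      · rintro rfl; exact hb' rfl
      · rintro rfl; exact hc' rfl
    · right
      refine ⟨A, u, v, huv.ne', ?_⟩
      intro x hx
      obtain ⟨x, rfl⟩ := phi_surj (A := A) huv.ne' x
      exact ⟨x, hsub hx, rfl⟩
  · intro x y hm
    have h := hC' _ hm
    have e : cr (phi A u v (x, y) - A) v = x * cr u v := by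
      simp only [cr, phi, Prod.fst_sub, Prod.snd_sub]; ring
    rw [e] at h
    exact nonneg_of_mul_nonneg_left h huv
  · intro x y hm
    have h := hB' _ hm
    have e : cr u (phi A u v (x, y) - A) = y * cr u v := by
      simp only [cr, phi, Prod.fst_sub, Prod.snd_sub]; ring
    rw [e] at h
    exact nonneg_of_mul_nonneg_left h huv
  · intro x hm
    by_contra hx
    push Not at hx
    have e1 : f (phi A u v (x, 0)) = x * f B := by
      simp only [hfd, phi, hu, Prod.fst_sub, Prod.snd_sub]; ring
    have e2 : g (phi A u v (x, 0)) = x * g B := by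
      simp only [hgd, phi, hu, Prod.fst_sub, Prod.snd_sub]; ring
    have hpA : phi A u v (x, 0) ≠ A := by
      intro h
      rw [h] at e1
      have : f A = 0 := by rw [hfd]; ring
      rw [this] at e1
      nlinarith
    have h := hBmax _ ⟨hm, hpA⟩
    rw [Prod.Lex.toLex_le_toLex] at h
    simp only [e1, e2] at h
    rw [mul_div_mul_left _ _ (by linarith)] at h
    rcases h with h | h
    · exact lt_irrefl _ h
    · nlinarith [h.2]
  · intro x hm
    by_contra hx
    push Not at hx
    have e1 : f (phi A u v (0, x)) = x * f C := by
      simp only [hfd, phi, hv, Prod.fst_sub, Prod.snd_sub]; ring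
    have e2 : g (phi A u v (0, x)) = x * g C := by
      simp only [hgd, phi, hv, Prod.fst_sub, Prod.snd_sub]; ring
    have hpA : phi A u v (0, x) ≠ A := by
      intro h
      rw [h] at e1
      have : f A = 0 := by rw [hfd]; ring
      rw [this] at e1
      nlinarith
    have h := hCmax _ ⟨hm, hpA⟩
    rw [Prod.Lex.toLex_le_toLex] at h
    simp only [e1, e2] at h
    rw [mul_div_mul_left _ _ (by linarith)] at h
    rcases h with h | h
    · exact lt_irrefl _ h
    · nlinarith [h.2]

lemma near_pencil {S : Set (ℝ × ℝ)} (hn : ¬ Collinear ℝ S) (p : ℝ × ℝ)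
    (h : Collinear ℝ (S \ {p})) :
    ∃ p ∈ S, Collinear ℝ (S \ {p}) ∧ p ∉ affineSpan ℝ (S \ {p}) := by
  have hp : p ∈ S := by
    by_contra hp
    rw [Set.sdiff_singleton_eq_self hp] at h
    exact hn h
  refine ⟨p, hp, h, ?_⟩
  intro hm
  apply hn
  have := (collinear_insert_iff_of_mem_affineSpan hm).2 h
  rwa [Set.insert_sdiff_singleton, Set.insert_eq_of_mem hp] at this

lemma five_line {a b x : ℝ × ℝ} (ha : a ∈ five) (hb : b ∈ five) (h : cr (b - a) (x - a) = 0) :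
    a = b ∨ (b.1 - a.1 = 0 ∧ (x.1 = 0 ∨ x.1 = 1)) ∨ (b.2 - a.2 = 0 ∧ (x.2 = 0 ∨ x.2 = 1)) ∨
    (b.1 - a.1 = b.2 - a.2 ∧ x.1 = x.2) ∨ (b.1 - a.1 = -(b.2 - a.2) ∧ x.1 = 1 - x.2) := by
  simp only [five, Set.mem_insert_iff, Set.mem_singleton_iff] at ha hb
  rcases ha with rfl | rfl | rfl | rfl | rfl <;> rcases hb with rfl | rfl | rfl | rfl | rfl <;>
    simp [cr] at h ⊢ <;> norm_num at h ⊢ <;> grind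

lemma clo_five : Clo five := by
  intro a ha b hb c hc d hd x h0 h1 h2
  have k1 := five_line ha hb h1
  have k2 := five_line hc hd h2
  clear h1 h2 ha hb hc hd
  have hab : a ≠ b := by rintro rfl; simp [cr] at h0
  have hcd : c ≠ d := by rintro rfl; simp [cr] at h0
  replace k1 := k1.resolve_left hab
  replace k2 := k2.resolve_left hcd
  simp only [cr, Prod.fst_sub, Prod.snd_sub] at h0
  obtain ⟨x, y⟩ := x
  simp only [five, Set.mem_insert_iff, Set.mem_singleton_iff, Prod.mk.injEq]
  simp only at k1 k2
  generalize b.1 - a.1 = b1 at *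
  generalize b.2 - a.2 = b2 at *
  generalize d.1 - c.1 = d1 at *
  generalize d.2 - c.2 = d2 at *
  rcases k1 with ⟨e, k⟩ | ⟨e, k⟩ | ⟨e, k⟩ | ⟨e, k⟩ <;>
    rcases k2 with ⟨e', k'⟩ | ⟨e', k'⟩ | ⟨e', k'⟩ | ⟨e', k'⟩ <;> subst e <;> subst e' <;>
    first
    | (exfalso; apply h0; ring1)
    | grind

lemma clo_phi_five {A u v : ℝ × ℝ} (h : cr u v ≠ 0) : Clo (phi A u v '' five) := by
  rw [← clo_phi (A := A) h, Set.preimage_image_eq _ (phi_inj h)]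
  exact clo_five

lemma phi_five (A u v : ℝ × ℝ) : phi A u v '' five =
    {A, A + u, A + u + v, A + v, midpoint ℝ A (A + u + v)} := by
  have e0 : phi A u v (0, 0) = A := by ext <;> simp [phi]
  have e1 : phi A u v (1, 0) = A + u := by ext <;> simp [phi]
  have e2 : phi A u v (1, 1) = A + u + v := by ext <;> simp [phi]
  have e3 : phi A u v (0, 1) = A + v := by ext <;> simp [phi]
  have e4 : phi A u v (1 / 2, 1 / 2) = midpoint ℝ A (A + u + v) := by
    rw [midpoint_eq_smul_add]
    ext <;> simp [phi] <;> ring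
  rw [five, Set.image_insert_eq, Set.image_insert_eq, Set.image_insert_eq, Set.image_insert_eq,
    Set.image_singleton, e0, e1, e2, e3, e4]

lemma isPar_of {A u v : ℝ × ℝ} (h : cr u v ≠ 0) :
    IsParallelogram A (A + u) (A + u + v) (A + v) := by
  refine ⟨by abel, ?_, ?_⟩
  · intro h'
    have : u = 0 := by simpa using h'
    subst this
    simp [cr] at h
  · intro hc
    rw [collinear_iff_cr] at hc
    have := hc A (by simp) (A + u) (by simp) (A + v) (by simp)
    simp only [add_sub_cancel_left] at this
    exact h this

lemma par_coords {A B C D : ℝ × ℝ} (h : IsParallelogram A B C D) :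
    ∃ u v, cr u v ≠ 0 ∧ B = A + u ∧ C = A + u + v ∧ D = A + v := by
  obtain ⟨h1, h2, h3⟩ := h
  refine ⟨B - A, D - A, ?_, by abel, ?_, by abel⟩
  · intro h0
    apply h3
    apply collinear_of_line A h2
    intro p hp
    simp only [Set.mem_insert_iff, Set.mem_singleton_iff] at hp
    rcases hp with rfl | rfl | rfl
    · simp [cr]
    · simp only [cr]; ring
    · exact h0
  · rw [h1]; abel

lemma near_pencil_clo {S : Set (ℝ × ℝ)} {p : ℝ × ℝ} (hp : p ∈ S)
    (h : Collinear ℝ (S \ {p})) : Clo S := by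
  rw [collinear_iff_cr] at h
  have base : ∀ q ∈ S, q ≠ p → ∀ c ∈ S, c ≠ p → ∀ d ∈ S, d ≠ p → cr (d - c) (q - c) = 0 :=
    fun q hq hqp c hc hcp d hd hdp => h c ⟨hc, hcp⟩ d ⟨hd, hdp⟩ q ⟨hq, hqp⟩
  -- a line through `p` and `q`, and a line through two other points
  have one : ∀ a ∈ S, ∀ b ∈ S, ∀ c ∈ S, ∀ d ∈ S, ∀ x : ℝ × ℝ, (a = p ∨ b = p) → c ≠ p → d ≠ p →
      cr (b - a) (d - c) ≠ 0 → cr (b - a) (x - a) = 0 → cr (d - c) (x - c) = 0 → x ∈ S := by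
    intro a ha b hb c hc d hd x hab hcp hdp h0 h1 h2
    have hne : a ≠ b := by rintro rfl; simp [cr] at h0
    by_cases hap : a = p
    · have hbp : b ≠ p := fun h => hne (hap.trans h.symm)
      have : x = b := cr_unique a c h0 h1 (by simp only [cr]; ring) h2
        (base b hb hbp c hc hcp d hd hdp)
      rwa [this]
    · have : x = a := cr_unique a c h0 h1 (by simp [cr]) h2
        (base a ha hap c hc hcp d hd hdp)
      rwa [this]
  intro a ha b hb c hc d hd x h0 h1 h2
  by_cases hab : a = p ∨ b = p
  · by_cases hcd : c = p ∨ d = p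
    · have : x = p := by
        refine cr_unique a c h0 h1 ?_ h2 ?_
        · rcases hab with rfl | rfl
          · simp [cr]
          · simp only [cr]; ring
        · rcases hcd with rfl | rfl
          · simp [cr]
          · simp only [cr]; ring
      rwa [this]
    · push Not at hcd
      exact one a ha b hb c hc d hd x hab hcd.1 hcd.2 h0 h1 h2
  · push Not at hab
    by_cases hcd : c = p ∨ d = p
    · refine one c hc d hd a ha b hb x hcd hab.1 hab.2 ?_ h2 h1
      intro h
      apply h0
      simp only [cr] at *
      linarith
    · push Not at hcd
      exfalso
      apply h0
      have k1 := base c hc hcd.1 a ha hab.1 b hb hab.2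
      have k2 := base d hd hcd.2 a ha hab.1 b hb hab.2
      simp only [cr, Prod.fst_sub, Prod.snd_sub] at *
      linarith

lemma interT_collinear {S : Set (ℝ × ℝ)} (h : Collinear ℝ S) : interT S = ∅ := by
  rw [Set.eq_empty_iff_forall_notMem]
  intro x hx
  rw [mem_interT] at hx
  obtain ⟨a, ha, b, hb, c, hc, d, hd, h0, -, -⟩ := hx
  rw [collinear_iff_cr] at h
  apply h0
  have k1 := h a ha b hb c hc
  have k2 := h a ha b hb d hd
  simp only [cr, Prod.fst_sub, Prod.snd_sub] at *
  linarith

lemma interT_eq_self {S : Set (ℝ × ℝ)} (hn : ¬ Collinear ℝ S) (h : Clo S) : interT S = S :=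
  Set.Subset.antisymm ((clo_iff S).1 h) (subset_interT hn)

lemma subset_five {S : Set (ℝ × ℝ)} (hn : ¬ Collinear ℝ S) {A u v : ℝ × ℝ} (h : cr u v ≠ 0)
    (hS : S ⊆ phi A u v '' five) :
    (∃ p ∈ S, Collinear ℝ (S \ {p}) ∧ p ∉ affineSpan ℝ (S \ {p})) ∨
       (∃ A B C D : ℝ × ℝ, IsParallelogram A B C D ∧ S = {A, B, C, D}) ∨
       (∃ A B C D : ℝ × ℝ, IsParallelogram A B C D ∧
          S = {A, B, C, D, midpoint ℝ A C}) := by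
  rw [phi_five] at hS
  have hM : midpoint ℝ A (A + u + v) = A + (1 / 2 : ℝ) • u + (1 / 2 : ℝ) • v := by
    rw [midpoint_eq_smul_add]
    ext <;> simp <;> ring
  have hd : ∀ x ∈ S, x = A ∨ x = A + u ∨ x = A + u + v ∨ x = A + v ∨
      x = midpoint ℝ A (A + u + v) := fun x hx => by simpa using hS hx
  have d1 : v - u ≠ 0 := by
    intro h'
    rw [sub_eq_zero] at h'
    subst h'
    apply h; simp only [cr]; ring
  have d2 : u + v ≠ 0 := by
    intro h'
    rw [add_eq_zero_iff_eq_neg] at h'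
    subst h'
    apply h; simp only [cr, Prod.fst_neg, Prod.snd_neg]; ring
  by_cases m0 : A ∈ S
  swap
  · left
    refine near_pencil hn (A + u + v) (collinear_of_line (A + u) d1 ?_)
    rintro x ⟨hx, hx'⟩
    rcases hd x hx with rfl | rfl | rfl | rfl | rfl
    · exact absurd hx m0
    · simp [cr]
    · exact absurd rfl hx'
    · simp [cr]; ring
    · rw [hM]; simp [cr]; ring
  by_cases m1 : A + u ∈ S
  swap
  · left
    refine near_pencil hn (A + v) (collinear_of_line A d2 ?_)
    rintro x ⟨hx, hx'⟩
    rcases hd x hx with rfl | rfl | rfl | rfl | rfl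
    · simp [cr]
    · exact absurd hx m1
    · simp [cr]; ring
    · exact absurd rfl hx'
    · rw [hM]; simp [cr]; ring
  by_cases m2 : A + u + v ∈ S
  swap
  · left
    refine near_pencil hn A (collinear_of_line (A + u) d1 ?_)
    rintro x ⟨hx, hx'⟩
    rcases hd x hx with rfl | rfl | rfl | rfl | rfl
    · exact absurd rfl hx'
    · simp [cr]
    · exact absurd hx m2
    · simp [cr]; ring
    · rw [hM]; simp [cr]; ring
  by_cases m3 : A + v ∈ S
  swap
  · left
    refine near_pencil hn (A + u) (collinear_of_line A d2 ?_)
    rintro x ⟨hx, hx'⟩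
    rcases hd x hx with rfl | rfl | rfl | rfl | rfl
    · simp [cr]
    · exact absurd rfl hx'
    · simp [cr]; ring
    · exact absurd hx m3
    · rw [hM]; simp [cr]; ring
  right
  by_cases m4 : midpoint ℝ A (A + u + v) ∈ S
  · right
    refine ⟨A, A + u, A + u + v, A + v, isPar_of h, Set.Subset.antisymm hS ?_⟩
    intro x hx
    simp only [Set.mem_insert_iff, Set.mem_singleton_iff] at hx
    rcases hx with rfl | rfl | rfl | rfl | rfl <;> assumption
  · left
    refine ⟨A, A + u, A + u + v, A + v, isPar_of h, Set.Subset.antisymm ?_ ?_⟩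
    · intro x hx
      simp only [Set.mem_insert_iff, Set.mem_singleton_iff]
      rcases hd x hx with h | h | h | h | h
      · simp [h]
      · simp [h]
      · simp [h]
      · simp [h]
      · exact absurd (h ▸ hx) m4
    · intro x hx
      simp only [Set.mem_insert_iff, Set.mem_singleton_iff] at hx
      rcases hx with rfl | rfl | rfl | rfl <;> assumption

lemma iterate_facts {S : Set (ℝ × ℝ)} (hS : S.Finite) (hn : ¬ Collinear ℝ S) (n : ℕ) :
    (interT^[n] S).Finite ∧ S ⊆ interT^[n] S := by
  induction n with
  | zero => exact ⟨hS, subset_rfl⟩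
  | succ n ih =>
    rw [Function.iterate_succ_apply']
    exact ⟨interT_finite ih.1, ih.2.trans (subset_interT fun h => hn (h.subset ih.2))⟩

/-- A finite set `S ⊆ ℝ²` has finite order under `T` (the iterates eventually stabilize)
iff `S` is empty, collinear, a collinear set plus a point off its line, the vertices of
a nondegenerate parallelogram, or such vertices plus the intersection of the diagonals. -/
theorem finite_order_iff_exceptional (S : Set (ℝ × ℝ)) (hS : S.Finite) :
    (∃ n : ℕ, interT^[n + 1] S = interT^[n] S) ↔
      (S = ∅ ∨
       Collinear ℝ S ∨
       (∃ p ∈ S, Collinear ℝ (S \ {p}) ∧ p ∉ affineSpan ℝ (S \ {p})) ∨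
       (∃ A B C D : ℝ × ℝ, IsParallelogram A B C D ∧ S = {A, B, C, D}) ∨
       (∃ A B C D : ℝ × ℝ, IsParallelogram A B C D ∧
          S = {A, B, C, D, midpoint ℝ A C})) := by
  constructor
  · rintro ⟨n, hfix⟩
    by_cases hn : Collinear ℝ S
    · exact Or.inr (Or.inl hn)
    right; right
    obtain ⟨hfin, hsub⟩ := iterate_facts hS hn n
    rw [Function.iterate_succ_apply'] at hfix
    have hclo : Clo (interT^[n] S) := (clo_iff _).2 hfix.le
    rcases classify hfin hclo (fun h => hn (h.subset hsub)) with ⟨p, -, hp⟩ | ⟨A, u, v, huv, hR⟩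
    · left
      exact near_pencil hn p (hp.subset (Set.diff_subset_diff_left hsub))
    · exact subset_five hn huv (hsub.trans hR)
  · have hcol : Collinear ℝ S → ∃ n : ℕ, interT^[n + 1] S = interT^[n] S := by
      intro h
      refine ⟨1, ?_⟩
      simp only [Function.iterate_succ_apply', Function.iterate_zero_apply, interT_collinear h]
      exact interT_collinear (collinear_empty ℝ _)
    by_cases hn : Collinear ℝ S
    · exact fun _ => hcol hn
    rintro (rfl | h | ⟨p, hp, h, -⟩ | ⟨A, B, C, D, hP, rfl⟩ | ⟨A, B, C, D, hP, rfl⟩)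
    · exact absurd (collinear_empty ℝ _) hn
    · exact absurd h hn
    · exact ⟨0, interT_eq_self hn (near_pencil_clo hp h)⟩
    · obtain ⟨u, v, huv, rfl, rfl, rfl⟩ := par_coords hP
      refine ⟨1, ?_⟩
      have h5 := clo_phi_five (A := A) huv
      rw [phi_five] at h5
      have hs : ({A, A + u, A + u + v, A + v} : Set (ℝ × ℝ)) ⊆
          {A, A + u, A + u + v, A + v, midpoint ℝ A (A + u + v)} := by
        intro x hx
        simp only [Set.mem_insert_iff, Set.mem_singleton_iff] at hx ⊢
        tauto
      have hn5 : ¬ Collinear ℝ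
          ({A, A + u, A + u + v, A + v, midpoint ℝ A (A + u + v)} : Set (ℝ × ℝ)) :=
        fun h => hn (h.subset hs)
      have e : interT {A, A + u, A + u + v, A + v} =
          {A, A + u, A + u + v, A + v, midpoint ℝ A (A + u + v)} := by
        refine Set.Subset.antisymm ((interT_mono hs).trans ((clo_iff _).1 h5)) ?_
        have hsub := subset_interT hn
        intro x hx
        simp only [Set.mem_insert_iff, Set.mem_singleton_iff] at hx
        rcases hx with rfl | rfl | rfl | rfl | rfl
        · exact hsub (by simp)
        · exact hsub (by simp)
        · exact hsub (by simp)
        · exact hsub (by simp)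
        · rw [mem_interT]
          refine ⟨A, by simp, A + u + v, by simp, A + u, by simp, A + v, by simp, ?_, ?_, ?_⟩
          · intro h0
            apply huv
            simp [cr] at h0 ⊢
            linarith
          · rw [midpoint_eq_smul_add]
            simp [cr]; ring
          · rw [midpoint_eq_smul_add]
            simp [cr]; ring
      simp only [Function.iterate_succ_apply', Function.iterate_zero_apply]
      rw [e]
      exact interT_eq_self hn5 h5
    · obtain ⟨u, v, huv, rfl, rfl, rfl⟩ := par_coords hP
      have h5 := clo_phi_five (A := A) huv
      rw [phi_five] at h5
      exact ⟨0, interT_eq_self hn h5⟩
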